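/- Let π be a uniformly distributed random permutation of {1,…,n}. Then there exists a constant C > 0 depending only on K such that for all n ≥ 2 and all h₂ ∈ (0,1), | Var(b̄_{π(1)}) − 1/45 | ≤ C·(h₂ + 1/n), where Var(b̄_{π(1)}) = (1/n) Σ_{i=1}^n b̄_i² − ((1/n) Σ_{i=1}^n b̄_i)². -/

import Mathlib

open Finset MeasureTheory

/-- The cumulative distribution function `K̄(x) = ∫_{-∞}^x K(t) dt` of the kernel `K`. -/
noncomputable def kbar (K : ℝ → ℝ) (x : ℝ) : ℝ := ∫ t in Set.Iic x, K t

/-- `B_{ij} = ∫₀¹ K̄((v - i/n)/h₂) K̄((v - j/n)/h₂) dv` (indices `1 ≤ i, j ≤ n`). -/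
noncomputable def BCoef (K : ℝ → ℝ) (n : ℕ) (h₂ : ℝ) (i j : ℕ) : ℝ :=
  ∫ v in (0:ℝ)..1, kbar K ((v - i / n) / h₂) * kbar K ((v - j / n) / h₂)

/-- `b̄_i = (1/(n-1)) ∑_{k ≠ i} B_{ik}`. -/
noncomputable def bbar (K : ℝ → ℝ) (n : ℕ) (h₂ : ℝ) (i : ℕ) : ℝ :=
  (1 / ((n : ℝ) - 1)) * ∑ k ∈ Finset.Icc 1 n, if k ≠ i then BCoef K n h₂ i k else 0

section Kbar

variable {K : ℝ → ℝ}

lemma kbar_nonneg (hKnonneg : ∀ x, 0 ≤ K x) (x : ℝ) : 0 ≤ kbar K x :=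
  integral_nonneg hKnonneg

lemma kbar_le_one (hKnonneg : ∀ x, 0 ≤ K x) (hKint : ∫ x, K x = 1) (x : ℝ) :
    kbar K x ≤ 1 := by
  rw [← hKint]
  exact setIntegral_le_integral (integrable_of_integral_eq_one hKint)
    (Filter.Eventually.of_forall hKnonneg)

lemma monotone_kbar (hKnonneg : ∀ x, 0 ≤ K x) (hKint : ∫ x, K x = 1) : Monotone (kbar K) :=
  fun _ _ hxy => setIntegral_mono_set (integrable_of_integral_eq_one hKint).integrableOn
    (Filter.Eventually.of_forall hKnonneg) (Set.Iic_subset_Iic.2 hxy).eventuallyLE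

lemma kbar_of_one_le (hKint : ∫ x, K x = 1)
    (hKsupp : ∀ x, x ∉ Set.Icc (-1 : ℝ) 1 → K x = 0) {x : ℝ} (hx : 1 ≤ x) :
    kbar K x = 1 := by
  rw [← hKint]
  refine setIntegral_eq_integral_of_forall_compl_eq_zero fun y hy => hKsupp y fun h => hy ?_
  exact h.2.trans hx

lemma kbar_of_lt_neg_one (hKsupp : ∀ x, x ∉ Set.Icc (-1 : ℝ) 1 → K x = 0) {x : ℝ}
    (hx : x < -1) : kbar K x = 0 :=
  setIntegral_eq_zero_of_forall_eq_zero fun y hy => hKsupp y fun h =>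
    (lt_of_le_of_lt hy hx).not_ge h.1

end Kbar

/-- A function on `[0, 1]` with values in `[0, 1]` that jumps from `0` to `1` within distance `h`
of `m` has integral `1 - m` up to `h`. -/
lemma abs_integral_sub_one_sub_le {P : ℝ → ℝ} {m h : ℝ}
    (hP : ∀ a b, IntervalIntegrable P volume a b)
    (hP_nonneg : ∀ v, 0 ≤ P v) (hP_le : ∀ v, P v ≤ 1) (hm0 : 0 ≤ m) (hm1 : m ≤ 1) (hh : 0 < h)
    (hP_zero : ∀ v, v < m - h → P v = 0) (hP_one : ∀ v, m + h ≤ v → P v = 1) :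
    |(∫ v in (0 : ℝ)..1, P v) - (1 - m)| ≤ h := by
  have upper : (∫ v in (0 : ℝ)..1, P v) ≤ 1 - m + h := by
    have hc1 : max 0 (m - h) ≤ 1 := max_le zero_le_one (by linarith)
    rw [← intervalIntegral.integral_add_adjacent_intervals (hP 0 (max 0 (m - h))) (hP _ 1)]
    have left : ∫ v in (0 : ℝ)..max 0 (m - h), P v = 0 := by
      rw [intervalIntegral.integral_of_le (le_max_left _ _), integral_Ioc_eq_integral_Ioo]
      refine setIntegral_eq_zero_of_forall_eq_zero fun v hv => hP_zero v ?_
      rcases lt_max_iff.1 hv.2 with h0 | h0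
      · exact absurd hv.1 h0.not_gt
      · exact h0
    have right : ∫ v in max 0 (m - h)..1, P v ≤ ∫ _v in max 0 (m - h)..1, (1 : ℝ) :=
      intervalIntegral.integral_mono_on hc1 (hP _ _) intervalIntegrable_const fun v _ => hP_le v
    rw [intervalIntegral.integral_const, smul_eq_mul, mul_one] at right
    linarith [le_max_right 0 (m - h)]
  have lower : 1 - m - h ≤ ∫ v in (0 : ℝ)..1, P v := by
    have hd0 : 0 ≤ min 1 (m + h) := le_min zero_le_one (by linarith)
    rw [← intervalIntegral.integral_add_adjacent_intervals (hP 0 (min 1 (m + h))) (hP _ 1)]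
    have left : 0 ≤ ∫ v in (0 : ℝ)..min 1 (m + h), P v :=
      intervalIntegral.integral_nonneg hd0 fun v _ => hP_nonneg v
    have right : ∫ v in min 1 (m + h)..1, P v = ∫ _v in min 1 (m + h)..1, (1 : ℝ) := by
      rw [intervalIntegral.integral_of_le (min_le_left _ _),
        intervalIntegral.integral_of_le (min_le_left _ _)]
      refine setIntegral_congr_fun measurableSet_Ioc fun v hv => hP_one v ?_
      rcases min_lt_iff.1 hv.1 with h0 | h0
      · exact absurd hv.2 h0.not_ge
      · exact h0.le
    rw [intervalIntegral.integral_const, smul_eq_mul, mul_one] at right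
    linarith [min_le_right 1 (m + h)]
  rw [abs_le]
  constructor <;> linarith

lemma abs_BCoef_sub_le {K : ℝ → ℝ} (hKnonneg : ∀ x, 0 ≤ K x) (hKint : ∫ x, K x = 1)
    (hKsupp : ∀ x, x ∉ Set.Icc (-1 : ℝ) 1 → K x = 0) {n i j : ℕ} (hi : i ≤ n) (hj : j ≤ n)
    {h : ℝ} (hh : 0 < h) :
    |BCoef K n h i j - (1 - max (i / n : ℝ) (j / n))| ≤ h := by
  have mono (a : ℝ) : Monotone fun v : ℝ => kbar K ((v - a) / h) := fun x y hxy =>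
    monotone_kbar hKnonneg hKint (by gcongr)
  have one {a v : ℝ} (hv : a + h ≤ v) : kbar K ((v - a) / h) = 1 :=
    kbar_of_one_le hKint hKsupp (by rw [le_div_iff₀ hh]; linarith)
  have zero {a v : ℝ} (hv : v < a - h) : kbar K ((v - a) / h) = 0 :=
    kbar_of_lt_neg_one hKsupp (by rw [div_lt_iff₀ hh]; linarith)
  refine abs_integral_sub_one_sub_le (fun a b => ?_)
    (fun v => mul_nonneg (kbar_nonneg hKnonneg _) (kbar_nonneg hKnonneg _))
    (fun v => mul_le_one₀ (kbar_le_one hKnonneg hKint _) (kbar_nonneg hKnonneg _)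
      (kbar_le_one hKnonneg hKint _))
    (le_max_of_le_left (by positivity))
    (max_le (div_le_one_of_le₀ (by exact_mod_cast hi) (by positivity))
      (div_le_one_of_le₀ (by exact_mod_cast hj) (by positivity))) hh
    (fun v hv => ?_) (fun v hv => ?_)
  · refine Monotone.intervalIntegrable fun x y hxy => ?_
    exact mul_le_mul (mono _ hxy) (mono _ hxy) (kbar_nonneg hKnonneg _) (kbar_nonneg hKnonneg _)
  · rcases le_total (i / n : ℝ) (j / n) with hij | hij
    · rw [max_eq_right hij] at hv
      rw [zero hv, mul_zero]
    · rw [max_eq_left hij] at hv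
      rw [zero hv, zero_mul]
  · rw [one (by linarith [le_max_left (i / n : ℝ) (j / n)]),
      one (by linarith [le_max_right (i / n : ℝ) (j / n)]), mul_one]

lemma sum_Icc_max {n i : ℕ} (hi : i ≤ n) :
    ∑ k ∈ Icc 1 n, max (i : ℝ) k = ((n : ℝ) ^ 2 + n + i ^ 2 - i) / 2 := by
  induction n, hi using Nat.le_induction with
  | base =>
    rw [sum_congr rfl (g := fun _ => (i : ℝ))
      fun k hk => max_eq_left (by exact_mod_cast (mem_Icc.1 hk).2)]
    simp
    ring
  | succ m hm ih =>
    rw [sum_Icc_succ_top (by omega), ih, max_eq_right (by exact_mod_cast hm.trans m.le_succ)]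
    push_cast
    ring

/-- The row sum of the limiting coefficients `1 - max (i / n) (k / n)` with the diagonal term
removed. -/
lemma sum_one_sub_max {n i : ℕ} (hn : 0 < n) (hi1 : 1 ≤ i) (hi : i ≤ n) :
    ∑ k ∈ Icc 1 n, (if k ≠ i then 1 - max (i / n : ℝ) (k / n) else 0)
      = n * ((1 - (i / n : ℝ) ^ 2) / 2) - 3 / 2 * (1 - i / n) := by
  have hn' : (0 : ℝ) < n := by exact_mod_cast hn
  have full : ∑ k ∈ Icc 1 n, (1 - max (i / n : ℝ) (k / n))
      = n - ((n : ℝ) ^ 2 + n + i ^ 2 - i) / 2 / n := by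
    rw [sum_sub_distrib, ← sum_Icc_max hi, sum_div]
    simp [max_div_div_right hn'.le]
  have split : ∀ k ∈ Icc 1 n, (if k ≠ i then 1 - max (i / n : ℝ) (k / n) else 0)
      = (1 - max (i / n : ℝ) (k / n)) - if k = i then 1 - (i / n : ℝ) else 0 := by
    intro k _
    by_cases hk : k = i <;> simp [hk]
  rw [sum_congr rfl split, sum_sub_distrib, full, sum_ite_eq', if_pos (mem_Icc.2 ⟨hi1, hi⟩)]
  field_simp
  ring

lemma abs_bbar_sub_le {K : ℝ → ℝ} (hKnonneg : ∀ x, 0 ≤ K x) (hKint : ∫ x, K x = 1)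
    (hKsupp : ∀ x, x ∉ Set.Icc (-1 : ℝ) 1 → K x = 0) {n i : ℕ} (hn : 2 ≤ n) (hi1 : 1 ≤ i)
    (hi : i ≤ n) {h : ℝ} (hh : 0 < h) :
    |bbar K n h i - (1 - (i / n : ℝ) ^ 2) / 2| ≤ h + 3 / n := by
  have hn' : (2 : ℝ) ≤ n := by exact_mod_cast hn
  have hpos : (0 : ℝ) < n - 1 := by linarith
  set T : ℝ := (1 - (i / n : ℝ) ^ 2) / 2 with hT
  have hx0 : (0 : ℝ) ≤ i / n := by positivity
  have hx1 : (i / n : ℝ) ≤ 1 := div_le_one_of_le₀ (by exact_mod_cast hi) (by positivity)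
  have sum_bound : |∑ k ∈ Icc 1 n, (if k ≠ i then BCoef K n h i k else 0)
      - ∑ k ∈ Icc 1 n, (if k ≠ i then 1 - max (i / n : ℝ) (k / n) else 0)| ≤ (n - 1) * h := by
    rw [← sum_sub_distrib]
    refine (abs_sum_le_sum_abs _ _).trans ?_
    calc _ ≤ ∑ k ∈ Icc 1 n, (h - if k = i then h else 0) := by
          refine sum_le_sum fun k hk => ?_
          by_cases hki : k = i
          · simp [hki]
          · simpa [hki] using
              abs_BCoef_sub_le hKnonneg hKint hKsupp hi (mem_Icc.1 hk).2 hh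
      _ = (n - 1) * h := by
          rw [sum_sub_distrib, sum_ite_eq', if_pos (mem_Icc.2 ⟨hi1, hi⟩)]
          simp
          ring
  rw [sum_one_sub_max (by omega) hi1 hi, ← hT] at sum_bound
  have scaled : |(n - 1) * (bbar K n h i - T)| ≤ (n - 1) * h + 3 / 2 := by
    have hb : (n - 1) * bbar K n h i
        = ∑ k ∈ Icc 1 n, (if k ≠ i then BCoef K n h i k else 0) := by
      rw [bbar, ← mul_assoc, mul_one_div_cancel hpos.ne', one_mul]
    rw [mul_sub, hb]
    have hT0 : 0 ≤ T := by rw [hT]; nlinarith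
    have hT1 : T ≤ 1 / 2 := by rw [hT]; nlinarith
    rw [abs_le] at sum_bound ⊢
    constructor <;> linarith [sum_bound.1, sum_bound.2]
  rw [abs_mul, abs_of_pos hpos] at scaled
  have hfrac : (3 / 2 : ℝ) ≤ (n - 1) * (3 / n) := by
    rw [mul_div_assoc', le_div_iff₀ (by linarith)]
    linarith
  refine le_of_mul_le_mul_left ?_ hpos
  linarith

lemma sum_Icc_sq (n : ℕ) :
    ∑ i ∈ Icc 1 n, (i : ℝ) ^ 2 = n * (n + 1) * (2 * n + 1) / 6 := by
  induction n with
  | zero => simp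
  | succ m ih =>
    rw [sum_Icc_succ_top (by omega), ih]
    push_cast
    ring

lemma sum_Icc_pow_four (n : ℕ) :
    ∑ i ∈ Icc 1 n, (i : ℝ) ^ 4
      = n * (n + 1) * (2 * n + 1) * (3 * (n : ℝ) ^ 2 + 3 * n - 1) / 30 := by
  induction n with
  | zero => simp
  | succ m ih =>
    rw [sum_Icc_succ_top (by omega), ih]
    push_cast
    ring

/-- The empirical mean of `(1 - x²) / 2` on the grid `i / n`. -/
lemma mean_grid {n : ℕ} (hn : 0 < n) :
    (1 / (n : ℝ)) * ∑ i ∈ Icc 1 n, (1 - (i / n : ℝ) ^ 2) / 2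
      = (1 - (1 / 3 + 1 / n / 2 + (1 / n) ^ 2 / 6)) / 2 := by
  have hn' : (n : ℝ) ≠ 0 := by exact_mod_cast hn.ne'
  rw [← sum_div, sum_sub_distrib]
  simp_rw [div_pow]
  rw [← sum_div, sum_Icc_sq]
  simp
  field_simp
  ring

/-- The empirical second moment of `(1 - x²) / 2` on the grid `i / n`. -/
lemma mean_sq_grid {n : ℕ} (hn : 0 < n) :
    (1 / (n : ℝ)) * ∑ i ∈ Icc 1 n, ((1 - (i / n : ℝ) ^ 2) / 2) ^ 2
      = (1 - 2 * (1 / 3 + 1 / n / 2 + (1 / n) ^ 2 / 6)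
          + (1 / 5 + 1 / n / 2 + (1 / n) ^ 2 / 3 - (1 / n) ^ 4 / 30)) / 4 := by
  have hn' : (n : ℝ) ≠ 0 := by exact_mod_cast hn.ne'
  have expand : ∀ i ∈ Icc 1 n, ((1 - (i / n : ℝ) ^ 2) / 2) ^ 2
      = 1 / 4 - (i : ℝ) ^ 2 * (1 / (2 * n ^ 2)) + (i : ℝ) ^ 4 * (1 / (4 * n ^ 4)) := by
    intro i _
    field_simp
    ring
  rw [sum_congr rfl expand, sum_add_distrib, sum_sub_distrib, ← sum_mul, ← sum_mul,
    sum_Icc_sq, sum_Icc_pow_four]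
  simp
  field_simp
  ring

lemma abs_variance_grid_sub_le {n : ℕ} (hn : 2 ≤ n) :
    |((1 / (n : ℝ)) * ∑ i ∈ Icc 1 n, ((1 - (i / n : ℝ) ^ 2) / 2) ^ 2
        - ((1 / (n : ℝ)) * ∑ i ∈ Icc 1 n, (1 - (i / n : ℝ) ^ 2) / 2) ^ 2) - 1 / 45|
      ≤ 1 / (n : ℝ) := by
  rw [mean_grid (by omega), mean_sq_grid (by omega)]
  have hn' : (2 : ℝ) ≤ n := by exact_mod_cast hn
  have hu0 : (0 : ℝ) ≤ 1 / n := by positivity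
  have hu1 : (1 / n : ℝ) ≤ 1 / 2 := one_div_le_one_div_of_le (by norm_num) hn'
  generalize (1 / n : ℝ) = u at hu0 hu1 ⊢
  have h2 : u ^ 2 ≤ u := by nlinarith
  have h3 : u ^ 3 ≤ u := by nlinarith [pow_nonneg hu0 2, pow_nonneg hu0 3]
  have h4 : u ^ 4 ≤ u := by nlinarith [pow_nonneg hu0 2, pow_nonneg hu0 3, pow_nonneg hu0 4]
  rw [abs_le]
  constructor <;>
    nlinarith [pow_nonneg hu0 2, pow_nonneg hu0 3, pow_nonneg hu0 4]

/-- The mean of finitely many numbers moves by at most `ε` if each of them does. -/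
lemma abs_mean_sub_mean_le {n : ℕ} (hn : 0 < n) {f g : ℕ → ℝ} {ε : ℝ}
    (hfg : ∀ i ∈ Icc 1 n, |f i - g i| ≤ ε) :
    |(1 / (n : ℝ)) * ∑ i ∈ Icc 1 n, f i - (1 / (n : ℝ)) * ∑ i ∈ Icc 1 n, g i| ≤ ε := by
  have hn' : (0 : ℝ) < n := by exact_mod_cast hn
  rw [← mul_sub, ← sum_sub_distrib, abs_mul, abs_of_pos (one_div_pos.2 hn'), one_div,
    inv_mul_le_iff₀ hn']
  refine (abs_sum_le_sum_abs _ _).trans ((sum_le_sum hfg).trans ?_)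
  simp

lemma abs_sq_sub_sq_le {b t ε : ℝ} (hbt : |b - t| ≤ ε) (hε : ε ≤ 5 / 2) (ht0 : 0 ≤ t)
    (ht1 : t ≤ 1 / 2) : |b ^ 2 - t ^ 2| ≤ 7 / 2 * ε := by
  have hsum : |b + t| ≤ 7 / 2 := by
    rw [abs_le] at hbt ⊢
    constructor <;> linarith [hbt.1, hbt.2]
  rw [sq_sub_sq, abs_mul]
  exact mul_le_mul hsum hbt (abs_nonneg _) (by norm_num)

/-- the variance of `b̄_{π(1)}` for a uniform random permutation `π`, namely
`(1/n) ∑ᵢ b̄ᵢ² - ((1/n) ∑ᵢ b̄ᵢ)²`, satisfies `|Var(b̄_{π(1)}) - 1/45| ≤ C (h₂ + 1/n)` for a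
constant `C` depending only on `K`. -/
theorem stmt11 (K : ℝ → ℝ)
    (hKcont : Continuous K) (hKsymm : ∀ x, K (-x) = K x)
    (hKnonneg : ∀ x, 0 ≤ K x) (hKint : ∫ x, K x = 1)
    (hKsupp : ∀ x, x ∉ Set.Icc (-1 : ℝ) 1 → K x = 0) :
    ∃ C > 0, ∀ n : ℕ, 2 ≤ n → ∀ h₂ ∈ Set.Ioo (0 : ℝ) 1,
      |((1 / (n : ℝ)) * ∑ i ∈ Finset.Icc 1 n, (bbar K n h₂ i) ^ 2
          - ((1 / (n : ℝ)) * ∑ i ∈ Finset.Icc 1 n, bbar K n h₂ i) ^ 2)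
        - 1 / 45| ≤ C * (h₂ + 1 / n) := by
  refine ⟨22, by norm_num, fun n hn h hh => ?_⟩
  have hn' : (2 : ℝ) ≤ n := by exact_mod_cast hn
  have hu0 : (0 : ℝ) ≤ 1 / n := by positivity
  have hu1 : (1 / n : ℝ) ≤ 1 / 2 := one_div_le_one_div_of_le (by norm_num) hn'
  have h3n : (3 / n : ℝ) = 3 * (1 / n) := by ring
  have hε : h + 3 / n ≤ 5 / 2 := by linarith [hh.2]
  have close : ∀ i ∈ Icc 1 n, |bbar K n h i - (1 - (i / n : ℝ) ^ 2) / 2| ≤ h + 3 / n :=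
    fun i hi => abs_bbar_sub_le hKnonneg hKint hKsupp hn (mem_Icc.1 hi).1 (mem_Icc.1 hi).2 hh.1
  have second_moment := abs_mean_sub_mean_le (n := n) (by omega)
    (f := fun i => bbar K n h i ^ 2) (g := fun i => ((1 - (i / n : ℝ) ^ 2) / 2) ^ 2)
    fun i hi => by
      have hx0 : (0 : ℝ) ≤ i / n := by positivity
      have hx1 : (i / n : ℝ) ≤ 1 :=
        div_le_one_of_le₀ (by exact_mod_cast (mem_Icc.1 hi).2) (by positivity)
      exact abs_sq_sub_sq_le (close i hi) hε (by nlinarith) (by nlinarith)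
  have mean := abs_mean_sub_mean_le (by omega) close
  have hgrid := mean_grid (n := n) (by omega)
  have mean_sq := abs_sq_sub_sq_le mean hε
    (by rw [hgrid]; nlinarith) (by rw [hgrid]; nlinarith)
  have grid := abs_variance_grid_sub_le hn
  rw [abs_le] at second_moment mean_sq grid ⊢
  constructor <;>
    linarith [second_moment.1, second_moment.2, mean_sq.1, mean_sq.2, grid.1, grid.2, hh.1]
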